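/- Suppose g is non-decreasing, and let X be a weak solution of the dyadic model with initial condition x ∈ H that satisfies the energy inequality on [0,t] for every t<T. For n≥1 set F_n(t) = ∑_{i≥n} X_i(t)², d_n(t)² = F_n(t) + ∑_{i≥n+1} ∫_0^t (2k_i/g_i) X_i(s)² ds, and d̄_n = sup_{0≤t<T} d_n(t) (which is finite). Then for every n≥1, d̄_{n+2}² ≤ C_{n+2}(d̄_{n+1}) · d̄_n² + F_{n+2}(0), where C_m(v) = (1 + 1/((1/2) g_m ‖φ‖_{ℓ^∞} v))^{-1}. -/

import Mathlib

open scoped BigOperators ENNReal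
open MeasureTheory Filter Set Topology

/-- `kₙ = 2^{βn}`. -/
noncomputable def kk (β : ℝ) (n : ℕ) : ℝ := (2 : ℝ) ^ (β * n)

/-- A weak solution of the dyadic model: `X 0 ≡ 0`, `X n 0 = x n`, and the ODE holds
for every `n ≥ 1` and `t ≥ 0` (the derivative being taken within `[0,∞)`). -/
def IsDyadicSolution (β : ℝ) (φ g : ℕ → ℝ) (x : ℕ → ℝ) (X : ℕ → ℝ → ℝ) : Prop :=
  (∀ t : ℝ, X 0 t = 0) ∧
  (∀ n : ℕ, 1 ≤ n → X n 0 = x n) ∧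
  (∀ n : ℕ, 1 ≤ n → ∀ t : ℝ, 0 ≤ t →
    HasDerivWithinAt (X n)
      (φ (n - 1) * kk β (n - 1) * (X (n - 1) t) ^ 2
        - φ n * kk β n * X n t * X (n + 1) t
        - kk β n / g n * X n t) (Set.Ici 0) t)

/-- The energy inequality at time `t`:
`∑_{n≥1} Xₙ(t)² + ∫_0^t ∑_{n≥1} (2kₙ/gₙ) Xₙ(s)² ds ≤ ∑_{n≥1} xₙ²`. -/
def EnergyIneqAt (β : ℝ) (g x : ℕ → ℝ) (X : ℕ → ℝ → ℝ) (t : ℝ) : Prop :=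
  (∑' n : ℕ, ENNReal.ofReal ((X (n + 1) t) ^ 2))
      + (∫⁻ s in Set.Ioc (0 : ℝ) t,
          ∑' n : ℕ, ENNReal.ofReal (2 * kk β (n + 1) / g (n + 1) * (X (n + 1) s) ^ 2))
    ≤ ∑' n : ℕ, ENNReal.ofReal ((x (n + 1)) ^ 2)

/-- `‖φ‖_{ℓ^∞} = sup_{n≥1} |φₙ|`. -/
noncomputable def phiNorm (φ : ℕ → ℝ) : ℝ := ⨆ n : ℕ, |φ (n + 1)|

/-- For `gₙ, Φ, v > 0` this is exactly `Cₙ(v) = (1 + 1/((1/2) gₙ Φ v))⁻¹`. -/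
noncomputable def Cfun (Φ : ℝ) (g : ℕ → ℝ) (n : ℕ) (v : ℝ) : ℝ :=
  (g n * Φ * v / 2) / (1 + g n * Φ * v / 2)

/-- `dₙ(t)² = Fₙ(t) + ∑_{i≥n+1} ∫_0^t (2kᵢ/gᵢ) Xᵢ(s)² ds`. -/
noncomputable def dSq (β : ℝ) (g : ℕ → ℝ) (X : ℕ → ℝ → ℝ) (n : ℕ) (t : ℝ) : ℝ :=
  (∑' i : ℕ, (X (n + i) t) ^ 2)
    + ∑' i : ℕ, ∫ s in Set.Ioc (0 : ℝ) t,
        2 * kk β (n + 1 + i) / g (n + 1 + i) * (X (n + 1 + i) s) ^ 2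

/-- The range of `t ↦ dₙ(t)` for `t ∈ [0,T)`. -/
noncomputable def dSet (β : ℝ) (g : ℕ → ℝ) (X : ℕ → ℝ → ℝ) (n : ℕ) (T : ℝ) : Set ℝ :=
  (fun t => Real.sqrt (dSq β g X n t)) '' Set.Ico 0 T

/-- `d̄ₙ = sup_{0 ≤ t < T} dₙ(t)`. -/
noncomputable def dBar (β : ℝ) (g : ℕ → ℝ) (X : ℕ → ℝ → ℝ) (n : ℕ) (T : ℝ) : ℝ :=
  sSup (dSet β g X n T)

lemma kk_pos (β : ℝ) (n : ℕ) : 0 < kk β n := by unfold kk; positivity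

lemma kk_mono {β : ℝ} (hβ : 0 < β) (n : ℕ) : kk β n ≤ kk β (n + 1) := by
  unfold kk
  apply Real.rpow_le_rpow_of_exponent_le (by norm_num)
  push_cast
  nlinarith

noncomputable def II (β : ℝ) (g : ℕ → ℝ) (X : ℕ → ℝ → ℝ) (i : ℕ) (t : ℝ) : ℝ :=
  ∫ s in Set.Ioc (0 : ℝ) t, 2 * kk β i / g i * (X i s) ^ 2

noncomputable def JJ (β : ℝ) (φ : ℕ → ℝ) (X : ℕ → ℝ → ℝ) (i : ℕ) (t : ℝ) : ℝ :=
  ∫ s in (0 : ℝ)..t, 2 * φ i * kk β i * (X i s) ^ 2 * X (i + 1) s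

lemma sol_cont {β : ℝ} {φ g x : ℕ → ℝ} {X : ℕ → ℝ → ℝ} (hsol : IsDyadicSolution β φ g x X)
    (i : ℕ) : ContinuousOn (X i) (Set.Ici 0) := by
  rcases Nat.eq_zero_or_pos i with rfl | hi
  · have : X 0 = fun _ => 0 := funext hsol.1
    rw [this]; exact continuousOn_const
  · intro t ht
    exact (hsol.2.2 i hi t ht).continuousWithinAt

lemma balance_one {β : ℝ} {φ g x : ℕ → ℝ} {X : ℕ → ℝ → ℝ} (hsol : IsDyadicSolution β φ g x X)
    (i : ℕ) (t : ℝ) (ht : 0 ≤ t) :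
    X (i + 1) t ^ 2 + II β g X (i + 1) t = x (i + 1) ^ 2 + JJ β φ X i t - JJ β φ X (i + 1) t := by
  have hc : ∀ j, ContinuousOn (X j) (Set.Icc 0 t) := fun j =>
    (sol_cont hsol j).mono Set.Icc_subset_Ici_self
  have c0 := hc i
  have c1 := hc (i + 1)
  have c2 := hc (i + 2)
  have hu : Set.uIcc 0 t = Set.Icc 0 t := Set.uIcc_of_le ht
  have i0 : IntervalIntegrable (fun s => 2 * φ i * kk β i * (X i s) ^ 2 * X (i + 1) s)
      volume 0 t := by
    apply ContinuousOn.intervalIntegrable; rw [hu]; fun_prop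
  have i1 : IntervalIntegrable
      (fun s => 2 * φ (i + 1) * kk β (i + 1) * (X (i + 1) s) ^ 2 * X (i + 1 + 1) s)
      volume 0 t := by
    apply ContinuousOn.intervalIntegrable; rw [hu]; fun_prop
  have i2 : IntervalIntegrable (fun s => 2 * kk β (i + 1) / g (i + 1) * (X (i + 1) s) ^ 2)
      volume 0 t := by
    apply ContinuousOn.intervalIntegrable; rw [hu]; fun_prop
  have key := intervalIntegral.integral_eq_sub_of_hasDerivAt_of_le (f := fun s => X (i + 1) s ^ 2)
    (f' := fun s => 2 * φ i * kk β i * (X i s) ^ 2 * X (i + 1) s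
      - 2 * φ (i + 1) * kk β (i + 1) * (X (i + 1) s) ^ 2 * X (i + 1 + 1) s
      - 2 * kk β (i + 1) / g (i + 1) * (X (i + 1) s) ^ 2) ht (by fun_prop) (by
      intro s hs
      have h := (hsol.2.2 (i + 1) (by omega) s hs.1.le).hasDerivAt (Ici_mem_nhds hs.1)
      have h2 := h.pow 2
      refine h2.congr_deriv ?_
      simp only [Nat.add_sub_cancel]
      push_cast
      ring) ((i0.sub i1).sub i2)
  rw [intervalIntegral.integral_sub (i0.sub i1) i2, intervalIntegral.integral_sub i0 i1] at key
  rw [intervalIntegral.integral_of_le ht (f := fun s => 2 * kk β (i + 1) / g (i + 1) * (X (i + 1) s) ^ 2)] at key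
  have h0 : X (i + 1) 0 = x (i + 1) := hsol.2.1 _ (by omega)
  simp only [h0] at key
  unfold II JJ
  linarith

lemma balance {β : ℝ} {φ g x : ℕ → ℝ} {X : ℕ → ℝ → ℝ} (hsol : IsDyadicSolution β φ g x X)
    (N : ℕ) (t : ℝ) (ht : 0 ≤ t) :
    ∑ i ∈ Finset.range N, X (i + 1) t ^ 2 + ∑ i ∈ Finset.range N, II β g X (i + 1) t
      = ∑ i ∈ Finset.range N, x (i + 1) ^ 2 - JJ β φ X N t := by
  induction N with
  | zero => simp [JJ, hsol.1]
  | succ N ih =>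
    simp only [Finset.sum_range_succ]
    linarith [balance_one hsol N t ht]

lemma II_nonneg {β : ℝ} {g : ℕ → ℝ} {X : ℕ → ℝ → ℝ}
    (hgpos : ∀ n : ℕ, 1 ≤ n → 0 < g n) (i : ℕ) (hi : 1 ≤ i) (t : ℝ) : 0 ≤ II β g X i t := by
  apply integral_nonneg
  intro s
  have := hgpos i hi
  have := kk_pos β i
  simp only [Pi.zero_apply]
  positivity

lemma energy {β : ℝ} {φ g x : ℕ → ℝ} {X : ℕ → ℝ → ℝ} (hsol : IsDyadicSolution β φ g x X)
    (hgpos : ∀ n : ℕ, 1 ≤ n → 0 < g n)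
    (hxH : Summable fun n : ℕ => (x (n + 1)) ^ 2) (t : ℝ)
    (h : EnergyIneqAt β g x X t) :
    Summable (fun i => X (i + 1) t ^ 2) ∧ Summable (fun i => II β g X (i + 1) t) ∧
    ∑' i, X (i + 1) t ^ 2 + ∑' i, II β g X (i + 1) t ≤ ∑' i, x (i + 1) ^ 2 := by
  unfold EnergyIneqAt at h
  have hc : ∀ j, ContinuousOn (X j) (Set.Icc 0 t) := fun j =>
    (sol_cont hsol j).mono Set.Icc_subset_Ici_self
  have hcc : ∀ i, ContinuousOn
      (fun s => 2 * kk β (i + 1) / g (i + 1) * (X (i + 1) s) ^ 2) (Set.Icc 0 t) := by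
    intro i
    have := hc (i + 1)
    fun_prop
  have hint : ∀ i, IntegrableOn
      (fun s => 2 * kk β (i + 1) / g (i + 1) * (X (i + 1) s) ^ 2) (Set.Ioc 0 t) := by
    intro i
    exact ((hcc i).integrableOn_compact isCompact_Icc).mono_set Set.Ioc_subset_Icc_self
  rw [lintegral_tsum (fun i => (hint i).aestronglyMeasurable.aemeasurable.ennreal_ofReal)] at h
  have hI : ∀ i, ∫⁻ s in Set.Ioc (0 : ℝ) t,
      ENNReal.ofReal (2 * kk β (i + 1) / g (i + 1) * (X (i + 1) s) ^ 2)
      = ENNReal.ofReal (II β g X (i + 1) t) := by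
    intro i
    unfold II
    rw [ofReal_integral_eq_lintegral_ofReal (hint i)]
    refine Filter.Eventually.of_forall fun s => ?_
    have := hgpos (i + 1) (by omega)
    have := kk_pos β (i + 1)
    simp only [Pi.zero_apply]
    positivity
  simp only [hI] at h
  rw [← ENNReal.ofReal_tsum_of_nonneg (fun i => sq_nonneg (x (i + 1))) hxH] at h
  have hne := ne_top_of_le_ne_top ENNReal.ofReal_ne_top h
  rw [ENNReal.add_ne_top] at hne
  have hpI : ∀ i, 0 ≤ II β g X (i + 1) t := fun i => II_nonneg hgpos _ (by omega) t
  have s1 : Summable (fun i => X (i + 1) t ^ 2) := by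
    have := ENNReal.summable_toReal hne.1
    simpa [ENNReal.toReal_ofReal, sq_nonneg] using this
  have s2 : Summable (fun i => II β g X (i + 1) t) := by
    have := ENNReal.summable_toReal hne.2
    simpa [ENNReal.toReal_ofReal, hpI] using this
  refine ⟨s1, s2, ?_⟩
  rw [← ENNReal.ofReal_tsum_of_nonneg (fun i => sq_nonneg (X (i + 1) t)) s1,
    ← ENNReal.ofReal_tsum_of_nonneg hpI s2,
    ← ENNReal.ofReal_add (tsum_nonneg fun i => sq_nonneg _) (tsum_nonneg hpI),
    ENNReal.ofReal_le_ofReal_iff (tsum_nonneg fun i => sq_nonneg _)] at h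
  exact h

/-- Tail splitting. -/
lemma tail_split {f : ℕ → ℝ} (hf : Summable fun i => f (i + 1)) (N : ℕ) :
    ∑' i, f (i + 1) = ∑ i ∈ Finset.range N, f (i + 1) + ∑' i, f (N + 1 + i) := by
  rw [← hf.sum_add_tsum_nat_add N]
  congr 1
  apply tsum_congr
  intro i
  congr 1
  omega

lemma dSq_eq (β : ℝ) (g : ℕ → ℝ) (X : ℕ → ℝ → ℝ) (n : ℕ) (t : ℝ) :
    dSq β g X n t = ∑' i, X (n + i) t ^ 2 + ∑' i, II β g X (n + 1 + i) t := rfl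

lemma JJ_bound {β : ℝ} (hβ : 0 < β) {φ g x : ℕ → ℝ} {X : ℕ → ℝ → ℝ}
    (hsol : IsDyadicSolution β φ g x X)
    (hφbdd : BddAbove (Set.range fun n : ℕ => |φ (n + 1)|))
    (hgpos : ∀ n : ℕ, 1 ≤ n → 0 < g n)
    (hgmono : ∀ n m : ℕ, 1 ≤ n → n ≤ m → g n ≤ g m)
    (n : ℕ) (t v : ℝ) (ht : 0 ≤ t) (hv : ∀ s ∈ Set.Icc 0 t, |X (n + 1) s| ≤ v) :
    JJ β φ X (n + 1) t ≤ g (n + 2) * phiNorm φ * v / 2 *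
      (II β g X (n + 1) t + II β g X (n + 2) t) := by
  have hc : ∀ j, ContinuousOn (X j) (Set.Icc 0 t) := fun j =>
    (sol_cont hsol j).mono Set.Icc_subset_Ici_self
  have c1 := hc (n + 1)
  have c2 := hc (n + 2)
  have hu : Set.uIcc 0 t = Set.Icc 0 t := Set.uIcc_of_le ht
  have j1 : IntervalIntegrable (fun s => 2 * kk β (n + 1) / g (n + 1) * (X (n + 1) s) ^ 2)
      volume 0 t := by
    apply ContinuousOn.intervalIntegrable; rw [hu]; fun_prop
  have j2 : IntervalIntegrable (fun s => 2 * kk β (n + 2) / g (n + 2) * (X (n + 2) s) ^ 2)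
      volume 0 t := by
    apply ContinuousOn.intervalIntegrable; rw [hu]; fun_prop
  have j0 : IntervalIntegrable
      (fun s => 2 * φ (n + 1) * kk β (n + 1) * (X (n + 1) s) ^ 2 * X (n + 1 + 1) s)
      volume 0 t := by
    apply ContinuousOn.intervalIntegrable; rw [hu]; fun_prop
  have hΦ : |φ (n + 1)| ≤ phiNorm φ := le_ciSup hφbdd n
  unfold II JJ
  rw [← intervalIntegral.integral_of_le ht, ← intervalIntegral.integral_of_le ht,
    ← intervalIntegral.integral_add j1 j2, ← intervalIntegral.integral_const_mul]
  apply intervalIntegral.integral_mono_on ht j0 ((j1.add j2).const_mul _)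
  intro s hs
  have hvs := hv s hs
  have hg1 := hgpos (n + 1) (by omega)
  have hg2 := hgpos (n + 2) (by omega)
  have hg := hgmono (n + 1) (n + 2) (by omega) (by omega)
  have hk1 := kk_pos β (n + 1)
  have hk := kk_mono hβ (n + 1)
  change kk β (n + 1) ≤ kk β (n + 2) at hk
  change _ * X (n + 2) s ≤ _
  have hΦ0 : 0 ≤ phiNorm φ := (abs_nonneg _).trans hΦ
  have hv0 : 0 ≤ v := (abs_nonneg _).trans hvs
  generalize X (n + 1) s = a at *
  generalize X (n + 2) s = b at *
  generalize phiNorm φ = Φ at *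
  generalize φ (n + 1) = f at *
  generalize kk β (n + 1) = p at *
  generalize kk β (n + 2) = q at *
  generalize g (n + 1) = g1 at *
  generalize g (n + 2) = g2 at *
  calc 2 * f * p * a ^ 2 * b ≤ |2 * f * p * a ^ 2 * b| := le_abs_self _
    _ = 2 * p * ((|f| * |a|) * (|a| * |b|)) := by
        rw [abs_mul, abs_mul, abs_mul, abs_mul, abs_of_pos hk1, abs_pow, abs_of_pos (by norm_num : (0:ℝ) < 2)]; ring
    _ ≤ 2 * p * ((Φ * v) * ((a ^ 2 + b ^ 2) / 2)) := by
        have : |a| * |b| ≤ (a ^ 2 + b ^ 2) / 2 := by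
          nlinarith [sq_nonneg (|a| - |b|), sq_abs a, sq_abs b]
        gcongr
    _ = Φ * v / 2 * (2 * p * a ^ 2 + 2 * p * b ^ 2) := by ring
    _ ≤ Φ * v / 2 * (2 * p * a ^ 2 * (g2 / g1) + 2 * q * b ^ 2) := by
        have : 1 ≤ g2 / g1 := by rw [le_div_iff₀ hg1]; linarith
        have h3 : 2 * p * a ^ 2 ≤ 2 * p * a ^ 2 * (g2 / g1) :=
          le_mul_of_one_le_right (by positivity) this
        gcongr
    _ = g2 * Φ * v / 2 * (2 * p / g1 * a ^ 2 + 2 * q / g2 * b ^ 2) := by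
        field_simp

/-- The key recursive estimate (3.4): `d̄ₙ` is finite and
`d̄_{n+2}² ≤ C_{n+2}(d̄_{n+1}) d̄ₙ² + F_{n+2}(0)`. -/
theorem dyadic_dbar_recursive_bound
    (β : ℝ) (hβ : 0 < β) (φ g : ℕ → ℝ)
    (hφbdd : BddAbove (Set.range fun n : ℕ => |φ (n + 1)|))
    (hgpos : ∀ n : ℕ, 1 ≤ n → 0 < g n)
    (hgmono : ∀ n m : ℕ, 1 ≤ n → n ≤ m → g n ≤ g m)
    (T : ℝ) (hT : 0 < T)
    (x : ℕ → ℝ) (hxH : Summable fun n : ℕ => (x (n + 1)) ^ 2)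
    (X : ℕ → ℝ → ℝ) (hsol : IsDyadicSolution β φ g x X)
    (hEI : ∀ t : ℝ, 0 ≤ t → t < T → EnergyIneqAt β g x X t) :
    (∀ n : ℕ, 1 ≤ n → BddAbove (dSet β g X n T)) ∧
    (∀ n : ℕ, 1 ≤ n →
      (dBar β g X (n + 2) T) ^ 2
        ≤ Cfun (phiNorm φ) g (n + 2) (dBar β g X (n + 1) T) * (dBar β g X n T) ^ 2
          + ∑' i : ℕ, (x (n + 2 + i)) ^ 2) := by
  have hshift : ∀ {f : ℕ → ℝ} (N : ℕ), Summable (fun i => f (i + 1)) →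
      Summable fun i => f (N + 1 + i) := by
    intro f N hf
    have := (summable_nat_add_iff N).2 hf
    refine this.congr fun i => ?_
    congr 1
    omega
  have hE : ∀ t ∈ Set.Ico 0 T, _ := fun t ht => energy hsol hgpos hxH t (hEI t ht.1 ht.2)
  have hII : ∀ i t, 0 ≤ II β g X (i + 1) t := fun i t => II_nonneg hgpos _ (by omega) t
  have hII' : ∀ N i t, 0 ≤ II β g X (N + 1 + i) t := fun N i t => II_nonneg hgpos _ (by omega) t
  have hd0 : ∀ n t, 0 ≤ dSq β g X n t := fun n t =>
    add_nonneg (tsum_nonneg fun i => sq_nonneg _) (tsum_nonneg fun i => hII' _ _ _)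
  have hbd : ∀ n : ℕ, 1 ≤ n → BddAbove (dSet β g X n T) := by
    intro n hn
    obtain ⟨n, rfl⟩ : ∃ m, n = m + 1 := ⟨n - 1, by omega⟩
    refine ⟨Real.sqrt (∑' i, x (i + 1) ^ 2), ?_⟩
    rintro _ ⟨t, ht, rfl⟩
    apply Real.sqrt_le_sqrt
    obtain ⟨s1, s2, h⟩ := hE t ht
    rw [dSq_eq]
    have a1 := tail_split (f := fun i => X i t ^ 2) s1 n
    have a2 := tail_split (f := fun i => II β g X i t) s2 (n + 1)
    have b1 : 0 ≤ ∑ i ∈ Finset.range n, X (i + 1) t ^ 2 :=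
      Finset.sum_nonneg fun i _ => sq_nonneg _
    have b2 : 0 ≤ ∑ i ∈ Finset.range (n + 1), II β g X (i + 1) t :=
      Finset.sum_nonneg fun i _ => hII i t
    linarith
  refine ⟨hbd, ?_⟩
  have hle : ∀ n : ℕ, 1 ≤ n → ∀ t ∈ Set.Ico 0 T, Real.sqrt (dSq β g X n t) ≤ dBar β g X n T :=
    fun n hn t ht => le_csSup (hbd n hn) ⟨t, ht, rfl⟩
  have hle2 : ∀ n : ℕ, 1 ≤ n → ∀ t ∈ Set.Ico 0 T, dSq β g X n t ≤ dBar β g X n T ^ 2 := by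
    intro n hn t ht
    rw [← Real.sq_sqrt (hd0 n t)]
    exact pow_le_pow_left₀ (Real.sqrt_nonneg _) (hle n hn t ht) 2
  have hXle : ∀ n : ℕ, 1 ≤ n → ∀ t ∈ Set.Ico 0 T, |X n t| ≤ dBar β g X n T := by
    intro n hn t ht
    refine le_trans ?_ (hle n hn t ht)
    apply Real.abs_le_sqrt
    obtain ⟨n, rfl⟩ : ∃ m, n = m + 1 := ⟨n - 1, by omega⟩
    have s1 := hshift (f := fun i => X i t ^ 2) n (hE t ht).1
    have h1 := s1.le_tsum 0 (fun i _ => sq_nonneg _)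
    have h2 : 0 ≤ ∑' i, II β g X (n + 1 + 1 + i) t := tsum_nonneg fun i => hII' _ _ _
    rw [dSq_eq]
    simp only [Nat.add_zero] at h1
    linarith
  intro n hn
  have hdb0 : 0 ≤ dBar β g X (n + 1) T :=
    (abs_nonneg _).trans (hXle (n + 1) (by omega) 0 ⟨le_rfl, hT⟩)
  have hΦ0 : 0 ≤ phiNorm φ := (abs_nonneg _).trans (le_ciSup hφbdd 0)
  have hg0 := hgpos (n + 2) (by omega)
  set v := dBar β g X (n + 1) T with hvdef
  unfold Cfun
  set A := g (n + 2) * phiNorm φ * v / 2 with hA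
  have hA0 : 0 ≤ A := by positivity
  have hF0 : 0 ≤ ∑' i : ℕ, (x (n + 2 + i)) ^ 2 := tsum_nonneg fun i => sq_nonneg _
  set R := A / (1 + A) * dBar β g X n T ^ 2 + ∑' i : ℕ, (x (n + 2 + i)) ^ 2 with hR
  have hR0 : 0 ≤ R := by positivity
  have main : ∀ t ∈ Set.Ico 0 T, dSq β g X (n + 2) t ≤ R := by
    intro t ht
    obtain ⟨s1, s2, h⟩ := hE t ht
    have hJ := JJ_bound hβ hsol hφbdd hgpos hgmono n t v ht.1
      (fun s hs => hXle (n + 1) (by omega) s ⟨hs.1, hs.2.trans_lt ht.2⟩)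
    have hB := balance hsol (n + 1) t ht.1
    have hdn := hle2 n hn t ht
    have a1 := tail_split (f := fun i => X i t ^ 2) s1 (n + 1)
    have a2 := tail_split (f := fun i => II β g X i t) s2 (n + 2)
    have a3 := tail_split (f := fun i => x i ^ 2) hxH (n + 1)
    obtain ⟨m, rfl⟩ : ∃ m, n = m + 1 := ⟨n - 1, by omega⟩
    have a4 := tail_split (f := fun i => X i t ^ 2) s1 m
    have a5 := tail_split (f := fun i => II β g X i t) s2 (m + 1)
    rw [dSq_eq] at hdn ⊢
    rw [← hA] at hJ
    simp only [Finset.sum_range_succ] at a1 a2 a3 a4 a5 hB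
    have n1 : 0 ≤ X (m + 1) t ^ 2 := sq_nonneg _
    have n2 : 0 ≤ X (m + 1 + 1) t ^ 2 := sq_nonneg _
    change _ + ∑' i, II β g X (m + 1 + 2 + 1 + i) t ≤ R
    rw [hR]
    set P := ∑' i, X (m + 1 + 2 + i) t ^ 2
    set Q := ∑' i, II β g X (m + 1 + 2 + 1 + i) t
    set F := ∑' i : ℕ, (x (m + 1 + 2 + i)) ^ 2
    set I1 := II β g X (m + 1 + 1) t
    set I2 := II β g X (m + 1 + 2) t
    set D := dBar β g X (m + 1) T ^ 2
    have hI2 : 0 ≤ I2 := hII _ _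
    have e1 : P + Q + I2 ≤ F + A * (I1 + I2) := by
      linarith
    have e2 : P + Q + I1 + I2 ≤ D := by
      linarith
    have e3 : (1 + A) * (P + Q) ≤ A * D + F := by nlinarith
    have e4 : P + Q ≤ (A * D + F) / (1 + A) := by
      rw [le_div_iff₀ (by positivity)]; linarith
    have e5 : F / (1 + A) ≤ F := div_le_self hF0 (by linarith)
    calc P + Q ≤ (A * D + F) / (1 + A) := e4
      _ = A / (1 + A) * D + F / (1 + A) := by ring
      _ ≤ _ := by linarith
  have hs : dBar β g X (n + 2) T ≤ Real.sqrt R := by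
    apply Real.sSup_le _ (Real.sqrt_nonneg _)
    rintro _ ⟨t, ht, rfl⟩
    exact Real.sqrt_le_sqrt (main t ht)
  have hdb2 : 0 ≤ dBar β g X (n + 2) T :=
    (abs_nonneg _).trans (hXle (n + 2) (by omega) 0 ⟨le_rfl, hT⟩)
  calc dBar β g X (n + 2) T ^ 2 ≤ Real.sqrt R ^ 2 := pow_le_pow_left₀ hdb2 hs 2
    _ = R := Real.sq_sqrt hR0
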